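/- FC(6, 9) ≤ 76; that is, every family of 76 distinct 6-element subsets of {1,…,9} whose universe equals {1,…,9} is FC. -/

import Mathlib

/-- The universe of a family of finite sets: the union of all its members. -/
def famUniverse (A : Finset (Finset ℕ)) : Finset ℕ := A.sup id

/-- A family is union-closed if it is nonempty and closed under pairwise unions. -/
def UnionClosed (F : Finset (Finset ℕ)) : Prop :=
  F.Nonempty ∧ ∀ A ∈ F, ∀ B ∈ F, A ∪ B ∈ F

/-- A family `A` is FC (Frankl-Complete) if for every union-closed family `F`
containing `A`, some element of the universe of `A` belongs to at least half
of the members of `F`. -/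
def IsFC (A : Finset (Finset ℕ)) : Prop :=
  ∀ F : Finset (Finset ℕ), UnionClosed F → A ⊆ F →
    ∃ x ∈ famUniverse A, F.card ≤ 2 * (F.filter (fun S => x ∈ S)).card

/-- `IsKFamily k n A` means `A` is a family of (distinct) `k`-element subsets of
`[n] = {1, …, n}` whose universe equals `[n]`. -/
def IsKFamily (k n : ℕ) (A : Finset (Finset ℕ)) : Prop :=
  (∀ S ∈ A, S.card = k ∧ S ⊆ Finset.Icc 1 n) ∧ famUniverse A = Finset.Icc 1 n

/-- The set of positive integers `m` such that every family of `m` distinct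
`k`-element subsets of `[n]` with universe `[n]` is FC.  `FC(k, n)` is the least
element of this set, when it exists. -/
def FCwitnesses (k n : ℕ) : Set ℕ :=
  {m : ℕ | 0 < m ∧ ∀ A : Finset (Finset ℕ), A.card = m → IsKFamily k n A → IsFC A}

/-!
Weight every point of the universe `U` by `1`. If every union-closed family `B ⊆ 𝒫(U)` absorbing
`A` has average member size at least `|U| / 2`, then `A` is FC: given `F ⊇ A`, sum this over the
traces on `U` of the classes of members of `F` that agree outside `U`, and average over the points
of `U`.

To bound the average size in `B`, count the members of each size `j` by double counting over the
`b`-subsets `Q` of `U`. A `Q ∉ B` that contains a member of `B` (a *gap*) has a point lying in no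
member of `B` inside `Q`, so it contains few members; a `Q ∉ B` that is not a gap contains none.
Such a point also keeps every `6`-subset of `Q` through it out of `A`. As `A` misses at most eight
of the `84` six-sets, there are no gaps of size `8` or `9`, at most one of size `7` and at most
eight of size `6`. Then small sets are outnumbered by their complementary sizes, with enough slack
to absorb the effect of the gaps of size `6`.
-/

open Finset
open scoped FinsetFamily

section Levels

variable {α : Type*} [DecidableEq α] {A B : Finset (Finset α)} {Q U X : Finset α} {b i j k : ℕ}

/-- The members of size `j` of the family `B` that are contained in `Q`. -/
def level (B : Finset (Finset α)) (j : ℕ) (Q : Finset α) : Finset (Finset α) :=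
  Q.powersetCard j ∩ B

/-- A gap of `B` is a set outside `B` that contains a member of `B`. These are the only sets
outside `B` that contribute when members of `B` are counted inside larger sets. -/
def IsGap (B : Finset (Finset α)) (Q : Finset α) : Prop :=
  Q ∉ B ∧ ∃ T ∈ B, T ⊆ Q

instance : DecidablePred (IsGap B) :=
  fun _ => inferInstanceAs (Decidable (_ ∧ _))

/-- The gaps of size `j` of the family `B` that are contained in `Q`. -/
def gaps (B : Finset (Finset α)) (j : ℕ) (Q : Finset α) : Finset (Finset α) :=
  {S ∈ Q.powersetCard j | IsGap B S}

theorem mem_level {S : Finset α} : S ∈ level B j Q ↔ (S ⊆ Q ∧ #S = j) ∧ S ∈ B := by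
  rw [level, mem_inter, mem_powersetCard]

theorem mem_gaps {S : Finset α} : S ∈ gaps B j Q ↔ (S ⊆ Q ∧ #S = j) ∧ IsGap B S := by
  rw [gaps, mem_filter, mem_powersetCard]

theorem card_level_add_card_powersetCard_sdiff (B : Finset (Finset α)) (j : ℕ) (Q : Finset α) :
    #(level B j Q) + #(Q.powersetCard j \ B) = (#Q).choose j := by
  rw [level, card_inter_add_card_sdiff, card_powersetCard]

theorem card_level_le (B : Finset (Finset α)) (j : ℕ) (Q : Finset α) :
    #(level B j Q) ≤ (#Q).choose j :=
  Nat.le.intro (card_level_add_card_powersetCard_sdiff B j Q)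

theorem card_level_zero_le (B : Finset (Finset α)) (Q : Finset α) : #(level B 0 Q) ≤ 1 :=
  (card_level_le B 0 Q).trans_eq (Nat.choose_zero_right _)

theorem level_zero_eq_empty (h : ∅ ∉ B) : level B 0 Q = ∅ := by
  rw [level, powersetCard_zero, singleton_inter_of_notMem h]

theorem card_level_card_self (h : Q ∈ B) : #(level B (#Q) Q) = 1 := by
  rw [level, powersetCard_self, singleton_inter_of_mem h, card_singleton]

theorem card_level_add_card_gaps_le (B : Finset (Finset α)) (j : ℕ) (Q : Finset α) :
    #(level B j Q) + #(gaps B j Q) ≤ (#Q).choose j := by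
  rw [← card_level_add_card_powersetCard_sdiff B j Q]
  gcongr
  intro S hS
  rw [mem_gaps] at hS
  exact mem_sdiff.2 ⟨mem_powersetCard.2 hS.1, hS.2.1⟩

theorem card_level_add_card_gaps (h : ∅ ∈ B) (j : ℕ) (Q : Finset α) :
    #(level B j Q) + #(gaps B j Q) = (#Q).choose j := by
  have hgaps : gaps B j Q = Q.powersetCard j \ B := by
    rw [gaps, ← filter_notMem_eq_sdiff]
    exact filter_congr fun S _ => and_iff_left ⟨∅, h, empty_subset S⟩
  rw [hgaps, card_level_add_card_powersetCard_sdiff]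

theorem sum_card_level (B : Finset (Finset α)) (X : Finset α) (hjb : j ≤ b) :
    ∑ Q ∈ X.powersetCard b, #(level B j Q) =
      (#X - j).choose (b - j) * #(level B j X) := by
  have hbelow (Q) (hQ : Q ∈ X.powersetCard b) : level B j Q = {S ∈ level B j X | S ⊆ Q} := by
    have hQX := (mem_powersetCard.1 hQ).1
    ext S
    rw [mem_filter, mem_level, mem_level]
    exact ⟨fun h => ⟨⟨⟨h.1.1.trans hQX, h.1.2⟩, h.2⟩, h.1.1⟩,
      fun h => ⟨⟨h.2, h.1.1.2⟩, h.1.2⟩⟩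
  have habove (S) (hS : S ∈ level B j X) :
      #{Q ∈ X.powersetCard b | S ⊆ Q} = (#X - j).choose (b - j) := by
    obtain ⟨⟨hSX, rfl⟩, -⟩ := mem_level.1 hS
    exact card_filter_powersetCard_subset S X b hSX hjb
  calc ∑ Q ∈ X.powersetCard b, #(level B j Q)
    _ = ∑ Q ∈ X.powersetCard b, #{S ∈ level B j X | S ⊆ Q} :=
      sum_congr rfl fun Q hQ => by rw [hbelow Q hQ]
    _ = ∑ S ∈ level B j X, #{Q ∈ X.powersetCard b | S ⊆ Q} := by
      simp only [card_filter]
      exact sum_comm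
    _ = (#X - j).choose (b - j) * #(level B j X) := by
      rw [sum_congr rfl habove, sum_const, smul_eq_mul, mul_comm]

theorem sum_powersetCard_ite (B : Finset (Finset α)) (b : ℕ) (X : Finset α) (p q : ℕ) :
    ∑ Q ∈ X.powersetCard b, (if Q ∈ B then p else if IsGap B Q then q else 0) =
      #(level B b X) * p + #(gaps B b X) * q := by
  have hsplit (Q : Finset α) : (if Q ∈ B then p else if IsGap B Q then q else 0) =
      (if Q ∈ B then p else 0) + if IsGap B Q then q else 0 := by
    by_cases hQ : Q ∈ B
    · have hgap : ¬ IsGap B Q := fun h => h.1 hQ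
      simp only [hQ, hgap, if_true, if_false, add_zero]
    · simp only [hQ, if_false, zero_add]
  simp only [hsplit, sum_add_distrib, ← sum_filter, sum_const, smul_eq_mul, gaps, level,
    filter_mem_eq_inter]

theorem sum_comp_card_eq_sum_level {M : Type*} [AddCommMonoid M] (hB : B ⊆ U.powerset)
    (f : ℕ → M) :
    ∑ S ∈ B, f #S = ∑ j ∈ range (#U + 1), #(level B j U) • f j := by
  have hmaps (S) (hS : S ∈ B) : #S ∈ range (#U + 1) :=
    mem_range_succ_iff.2 (card_le_card (mem_powerset.1 (hB hS)))
  rw [← sum_fiberwise_of_maps_to hmaps]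
  refine sum_congr rfl fun j _ => ?_
  have hlevel : {S ∈ B | #S = j} = level B j U := by
    ext S
    rw [mem_filter, mem_level]
    exact ⟨fun h => ⟨⟨mem_powerset.1 (hB h.1), h.2⟩, h.1⟩, fun h => ⟨h.2, h.1.2⟩⟩
  rw [← hlevel, ← sum_const]
  exact sum_congr rfl fun S hS => by rw [(mem_filter.1 hS).2]

theorem IsGap.exists_mem_forall_notMem (hB : SupClosed (B : Set (Finset α))) (hQ : IsGap B Q) :
    ∃ x ∈ Q, ∀ S ∈ B, S ⊆ Q → x ∉ S := by
  obtain ⟨hQB, T, hT, hTQ⟩ := hQ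
  let inside : Finset (Finset α) := {S ∈ B | S ⊆ Q}
  have hne : inside.Nonempty := ⟨T, mem_filter.2 ⟨hT, hTQ⟩⟩
  let V := inside.sup' hne id
  have hVB : V ∈ B := hB.finsetSup'_mem hne fun S hS => (mem_filter.1 hS).1
  have hVQ : V ⊆ Q := sup'_le hne id fun S hS => (mem_filter.1 hS).2
  obtain ⟨x, hxQ, hxV⟩ := exists_of_ssubset (hVQ.ssubset_of_ne (ne_of_mem_of_not_mem hVB hQB))
  exact ⟨x, hxQ, fun S hS hSQ hxS =>
    hxV (le_sup' id (mem_filter.2 ⟨hS, hSQ⟩ : S ∈ inside) hxS)⟩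

-- If `x` lies in no member of `B` inside `Q` and `T ∈ B` is inside `Q`, then `S ∪ T ∉ B`, hence
-- `S ∉ A`, for every `S ⊆ Q` through `x`.
theorem IsGap.choose_le_card_powersetCard_sdiff (hB : SupClosed (B : Set (Finset α)))
    (hAB : A ⊻ B ⊆ B) (hQ : IsGap B Q) (hk : 0 < k) :
    (#Q - 1).choose (k - 1) ≤ #(Q.powersetCard k \ A) := by
  obtain ⟨x, hxQ, hx⟩ := hQ.exists_mem_forall_notMem hB
  obtain ⟨-, T, hT, hTQ⟩ := hQ
  rw [← card_singleton x,
    ← card_filter_powersetCard_subset {x} Q k (singleton_subset_iff.2 hxQ) hk]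
  refine card_le_card fun S hS => ?_
  rw [mem_filter, mem_powersetCard, singleton_subset_iff] at hS
  refine mem_sdiff.2 ⟨mem_powersetCard.2 hS.1, fun hSA => ?_⟩
  exact hx (S ∪ T) (hAB (sup_mem_sups hSA hT)) (union_subset hS.1.1 hTQ) (mem_union_left T hS.2)

theorem IsGap.card_level_le (hB : SupClosed (B : Set (Finset α))) (hQ : IsGap B Q) (j : ℕ) :
    #(level B j Q) ≤ (#Q - 1).choose j := by
  rcases j.eq_zero_or_pos with rfl | hj
  · exact (card_level_zero_le B Q).trans_eq (Nat.choose_zero_right _).symm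
  · obtain ⟨x, hxQ, -⟩ := hQ.exists_mem_forall_notMem hB
    have hpascal := Nat.choose_eq_choose_pred_add (card_pos.2 ⟨x, hxQ⟩) hj
    have hmiss := hQ.choose_le_card_powersetCard_sdiff hB (sups_subset_self.2 hB) hj
    have hsplit := card_level_add_card_powersetCard_sdiff B j Q
    omega

theorem card_level_le_ite (hB : SupClosed (B : Set (Finset α))) (j : ℕ) (Q : Finset α) :
    #(level B j Q) ≤
      if Q ∈ B then (#Q).choose j else if IsGap B Q then (#Q - 1).choose j else 0 := by
  split_ifs with hQB hQ
  · exact card_level_le B j Q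
  · exact hQ.card_level_le hB j
  · rw [Nat.le_zero, card_eq_zero, eq_empty_iff_forall_notMem]
    intro S hS
    rw [mem_level] at hS
    exact hQ ⟨hQB, S, hS.2, hS.1.1⟩

theorem choose_mul_card_level_le (hB : SupClosed (B : Set (Finset α))) (X : Finset α)
    (hjb : j ≤ b) :
    (#X - j).choose (b - j) * #(level B j X) ≤
      #(level B b X) * b.choose j + #(gaps B b X) * (b - 1).choose j := by
  rw [← sum_card_level B X hjb, ← sum_powersetCard_ite]
  refine sum_le_sum fun Q hQ => ?_
  rw [← (mem_powersetCard.1 hQ).2]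
  exact card_level_le_ite hB j Q

theorem choose_mul_card_level_lt (hB : SupClosed (B : Set (Finset α))) (hjb : j ≤ b)
    (hgaps : gaps B b X = ∅) (hQ : Q ∈ level B b X) (hmiss : (Q.powersetCard j \ B).Nonempty) :
    (#X - j).choose (b - j) * #(level B j X) < #(level B b X) * b.choose j := by
  have hsum := sum_powersetCard_ite B b X (b.choose j) ((b - 1).choose j)
  rw [hgaps, card_empty, zero_mul, add_zero] at hsum
  rw [← sum_card_level B X hjb, ← hsum]
  obtain ⟨⟨hQX, hQb⟩, hQB⟩ := mem_level.1 hQ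
  refine sum_lt_sum (fun R hR => ?_) ⟨Q, mem_powersetCard.2 ⟨hQX, hQb⟩, ?_⟩
  · rw [← (mem_powersetCard.1 hR).2]
    exact card_level_le_ite hB j R
  · have hsplit := card_level_add_card_powersetCard_sdiff B j Q
    have hpos := hmiss.card_pos
    rw [if_pos hQB, ← hQb]
    omega

theorem card_level_le_card_level_sub (hB : SupClosed (B : Set (Finset α))) (hj : 0 < j)
    (hjU : 2 * j ≤ #U) (hgaps : #(gaps B (#U - j) U) ≤ 1) :
    #(level B j U) ≤ #(level B (#U - j) U) := by
  have hcount := choose_mul_card_level_le hB U (show j ≤ #U - j by omega)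
  rw [Nat.choose_symm (show j ≤ #U - j by omega)] at hcount
  have hpascal := Nat.choose_eq_choose_pred_add (show 0 < #U - j by omega) hj
  have hpos : 0 < (#U - j - 1).choose (j - 1) := Nat.choose_pos (by omega)
  refine Nat.lt_succ_iff.1 (Nat.lt_of_mul_lt_mul_left (a := (#U - j).choose j) ?_)
  calc (#U - j).choose j * #(level B j U)
    _ ≤ #(level B (#U - j) U) * (#U - j).choose j + 1 * (#U - j - 1).choose j := by
      exact hcount.trans (by gcongr)
    _ < #(level B (#U - j) U) * (#U - j).choose j + (#U - j).choose j := by omega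
    _ = (#U - j).choose j * (#(level B (#U - j) U) + 1) := by ring

theorem card_level_lt_card_level_sub (hB : SupClosed (B : Set (Finset α))) (hj : 0 < j)
    (hji : j ≤ i) (hiU : i + j ≤ #U) (hgaps : gaps B (#U - j) U = ∅) (hX : X ∈ gaps B i U) :
    #(level B j U) < #(level B (#U - j) U) := by
  obtain ⟨⟨hXU, rfl⟩, hXgap⟩ := mem_gaps.1 hX
  obtain ⟨Q, hXQ, hQU, hQ⟩ :=
    exists_subsuperset_card_eq hXU (show #X ≤ #U - j by omega) (Nat.sub_le _ _)
  have hQlevel : Q ∈ level B (#U - j) U := by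
    refine mem_level.2 ⟨⟨hQU, hQ⟩, by_contra fun hQB => ?_⟩
    obtain ⟨T, hT, hTX⟩ := hXgap.2
    exact eq_empty_iff_forall_notMem.1 hgaps Q
      (mem_gaps.2 ⟨⟨hQU, hQ⟩, hQB, T, hT, hTX.trans hXQ⟩)
  have hmiss : (X.powersetCard j \ B).Nonempty := card_pos.1 <|
    (Nat.choose_pos (by omega)).trans_le
      (hXgap.choose_le_card_powersetCard_sdiff hB (sups_subset_self.2 hB) hj)
  have hcount := choose_mul_card_level_lt hB (by omega) hgaps hQlevel
    (hmiss.mono (sdiff_subset_sdiff (powersetCard_mono hXQ) Subset.rfl))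
  rw [Nat.choose_symm (by omega), mul_comm] at hcount
  exact Nat.lt_of_mul_lt_mul_right hcount

end Levels

section GapCounts

variable {α : Type*} [DecidableEq α] {A B : Finset (Finset α)} {U : Finset α} {b k : ℕ}

theorem gaps_eq_empty_of_card_powersetCard_sdiff_lt (hB : SupClosed (B : Set (Finset α)))
    (hAB : A ⊻ B ⊆ B) (hk : 0 < k) (hmiss : #(U.powersetCard k \ A) < (b - 1).choose (k - 1)) :
    gaps B b U = ∅ := by
  refine eq_empty_of_forall_notMem fun Q hQ => hmiss.not_ge ?_
  obtain ⟨⟨hQU, rfl⟩, hQgap⟩ := mem_gaps.1 hQ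
  exact (hQgap.choose_le_card_powersetCard_sdiff hB hAB hk).trans
    (card_le_card (sdiff_subset_sdiff (powersetCard_mono hQU) Subset.rfl))

theorem card_gaps_le_card_powersetCard_sdiff (hAB : A ⊻ B ⊆ B) :
    #(gaps B k U) ≤ #(U.powersetCard k \ A) := by
  refine card_le_card fun X hX => ?_
  obtain ⟨hXU, hXB, T, hT, hTX⟩ := mem_gaps.1 hX
  refine mem_sdiff.2 ⟨mem_powersetCard.2 hXU, fun hXA => hXB ?_⟩
  rw [← union_eq_left.2 hTX]
  exact hAB (sup_mem_sups hXA hT)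

-- Each gap of size `k + 1` contains at least `k` of the `k`-sets missing from `A`, and two of them
-- share at most one `k`-set.
theorem card_gaps_succ_le_one (hB : SupClosed (B : Set (Finset α))) (hAB : A ⊻ B ⊆ B)
    (hk : 0 < k) (hmiss : #(U.powersetCard k \ A) < 2 * k - 1) : #(gaps B (k + 1) U) ≤ 1 := by
  refine card_le_one.2 fun Y hY Z hZ => by_contra fun hYZ => hmiss.not_ge ?_
  obtain ⟨⟨hYU, hYk⟩, hYgap⟩ := mem_gaps.1 hY
  obtain ⟨⟨hZU, hZk⟩, hZgap⟩ := mem_gaps.1 hZ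
  let M (Q : Finset α) := Q.powersetCard k \ A
  have hmany (Q) (hQ : #Q = k + 1) (hQgap : IsGap B Q) : k ≤ #(M Q) := by
    have hchoose := hQgap.choose_le_card_powersetCard_sdiff hB hAB hk
    rwa [hQ, Nat.add_sub_cancel, Nat.choose_symm hk, Nat.choose_one_right] at hchoose
  have hinter : #(M Y ∩ M Z) ≤ 1 := by
    have hcard : #(Y ∩ Z) ≤ k := by
      have hssub : Y ∩ Z ⊂ Y := inter_subset_left.ssubset_of_ne fun h =>
        hYZ (eq_of_subset_of_card_le (inter_eq_left.1 h) (by omega))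
      have := card_lt_card hssub
      omega
    calc #(M Y ∩ M Z)
      _ ≤ #((Y ∩ Z).powersetCard k) := card_le_card fun S hS => by
        simp only [M, mem_inter, mem_sdiff, mem_powersetCard] at hS
        exact mem_powersetCard.2 ⟨subset_inter hS.1.1.1 hS.2.1.1, hS.1.1.2⟩
      _ = (#(Y ∩ Z)).choose k := card_powersetCard _ _
      _ ≤ k.choose k := Nat.choose_le_choose k hcard
      _ = 1 := Nat.choose_self k
  have hunion : #(M Y ∪ M Z) ≤ #(U.powersetCard k \ A) := card_le_card <| union_subset
    (sdiff_subset_sdiff (powersetCard_mono hYU) Subset.rfl)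
    (sdiff_subset_sdiff (powersetCard_mono hZU) Subset.rfl)
  have hMY := hmany Y hYk hYgap
  have hMZ := hmany Z hZk hZgap
  have hsum := card_union_add_card_inter (M Y) (M Z)
  omega

end GapCounts

section NinePoints

variable {α : Type*} [DecidableEq α] {A B : Finset (Finset α)} {U X : Finset α}

-- Equality holds when `B` consists of all subsets of `X`, or of those avoiding a given point.
theorem three_mul_card_level_three_add_le_of_card_eq_six (hB : SupClosed (B : Set (Finset α)))
    (hX : #X = 6) :
    3 * #(level B 3 X) + 2 * #(level B 4 X) ≤
      5 * #(level B 5 X) + if X ∈ B then 60 else if IsGap B X then 35 else 0 := by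
  have h35 := choose_mul_card_level_le hB X (show 3 ≤ 5 by norm_num)
  have h45 := choose_mul_card_level_le hB X (show 4 ≤ 5 by norm_num)
  have h5 := card_level_add_card_gaps_le B 5 X
  have h3 := card_level_le_ite hB 3 X
  have h4 := card_level_le_ite hB 4 X
  have h5' := card_level_le_ite hB 5 X
  norm_num [hX, Nat.choose] at h35 h45 h5 h3 h4 h5'
  split_ifs at * <;> omega

theorem sum_six_subsets_card_level_le (hB : SupClosed (B : Set (Finset α))) (U : Finset α) :
    3 * ((#U - 3).choose 3 * #(level B 3 U)) + 2 * ((#U - 4).choose 2 * #(level B 4 U)) ≤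
      5 * ((#U - 5) * #(level B 5 U)) + (#(level B 6 U) * 60 + #(gaps B 6 U) * 35) := by
  have hsum := sum_le_sum fun X (hX : X ∈ U.powersetCard 6) =>
    three_mul_card_level_three_add_le_of_card_eq_six hB (mem_powersetCard.1 hX).2
  simpa only [sum_add_distrib, ← mul_sum, sum_card_level B U (show 3 ≤ 6 by norm_num),
    sum_card_level B U (show 4 ≤ 6 by norm_num), sum_card_level B U (show 5 ≤ 6 by norm_num),
    sum_powersetCard_ite, Nat.reduceSub, Nat.choose_one_right] using hsum

-- `14 = 7 * 8 / 4` is what eight gaps of size `6` can cost in the middle levels.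
theorem outer_levels_add_fourteen_le (hB : SupClosed (B : Set (Finset α))) (hU : #U = 9)
    (hUB : U ∈ B) (h7 : #(gaps B 7 U) ≤ 1) (h8 : gaps B 8 U = ∅) (hX : X ∈ gaps B 6 U) :
    9 * #(level B 0 U) + 7 * #(level B 1 U) + 5 * #(level B 2 U) + 14 ≤
      5 * #(level B 7 U) + 7 * #(level B 8 U) + 9 * #(level B 9 U) := by
  have h9 := card_level_card_self hUB
  have h18 := card_level_lt_card_level_sub (j := 1) hB (by norm_num) (by norm_num) (by omega)
    (by rwa [hU]) hX
  simp only [hU, Nat.reduceSub] at h9 h18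
  by_cases hempty : ∅ ∈ B
  · have h0 := card_level_zero_le B U
    have hlevel7 : 35 ≤ #(level B 7 U) := by
      have := card_level_add_card_gaps hempty 7 U
      norm_num [hU, Nat.choose] at this
      omega
    have hlevel2 : #(level B 2 U) ≤ 31 := by
      obtain ⟨⟨hXU, hX6⟩, hXgap⟩ := mem_gaps.1 hX
      have hmiss : 5 ≤ #(U.powersetCard 2 \ B) := by
        have hXmiss := hXgap.choose_le_card_powersetCard_sdiff hB (sups_subset_self.2 hB)
          (show 0 < 2 by norm_num)
        rw [hX6] at hXmiss
        exact hXmiss.trans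
          (card_le_card (sdiff_subset_sdiff (powersetCard_mono hXU) Subset.rfl))
      have := card_level_add_card_powersetCard_sdiff B 2 U
      norm_num [hU, Nat.choose] at this
      omega
    omega
  · have h27 := card_level_le_card_level_sub (U := U) (j := 2) hB (by norm_num) (by omega)
      (by rwa [hU])
    have h0 : #(level B 0 U) = 0 := by rw [level_zero_eq_empty hempty, card_empty]
    simp only [hU, Nat.reduceSub] at h27
    omega

theorem levels_le_of_card_eq_nine (hB : SupClosed (B : Set (Finset α))) (hU : #U = 9)
    (hUB : U ∈ B) (h6 : #(gaps B 6 U) ≤ 8) (h7 : #(gaps B 7 U) ≤ 1) (h8 : gaps B 8 U = ∅) :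
    9 * #(level B 0 U) + 7 * #(level B 1 U) + 5 * #(level B 2 U) + 3 * #(level B 3 U) +
        #(level B 4 U) ≤
      #(level B 5 U) + 3 * #(level B 6 U) + 5 * #(level B 7 U) + 7 * #(level B 8 U) +
        9 * #(level B 9 U) := by
  have hmiddle := sum_six_subsets_card_level_le hB U
  norm_num [hU, Nat.choose] at hmiddle
  rcases (gaps B 6 U).eq_empty_or_nonempty with hempty | ⟨X, hX⟩
  · have h0 := card_level_zero_le B U
    have h18 := card_level_le_card_level_sub (U := U) (j := 1) hB (by norm_num) (by omega)
      (by simp [hU, h8])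
    have h27 := card_level_le_card_level_sub (U := U) (j := 2) hB (by norm_num) (by omega)
      (by rwa [hU])
    have h9 := card_level_card_self hUB
    simp only [hU, Nat.reduceSub] at h9 h18 h27
    rw [hempty, card_empty] at hmiddle
    omega
  · have houter := outer_levels_add_fourteen_le hB hU hUB h7 h8 hX
    omega

theorem sum_two_mul_card_sub_nine_nonneg (hB : SupClosed (B : Set (Finset α)))
    (hAB : A ⊻ B ⊆ B) (hBU : B ⊆ U.powerset) (hne : B.Nonempty) (hU : #U = 9)
    (hmiss : #(U.powersetCard 6 \ A) ≤ 8) : 0 ≤ ∑ S ∈ B, (2 * (#S : ℤ) - 9) := by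
  have h6 : #(gaps B 6 U) ≤ 8 := (card_gaps_le_card_powersetCard_sdiff hAB).trans hmiss
  have h7 : #(gaps B 7 U) ≤ 1 := card_gaps_succ_le_one hB hAB (by norm_num) (by omega)
  have h8 : gaps B 8 U = ∅ := gaps_eq_empty_of_card_powersetCard_sdiff_lt hB hAB
    (show 0 < 6 by norm_num) (hmiss.trans_lt (by decide))
  have h9 : gaps B 9 U = ∅ := gaps_eq_empty_of_card_powersetCard_sdiff_lt hB hAB
    (show 0 < 6 by norm_num) (hmiss.trans_lt (by decide))
  have hUB : U ∈ B := by
    obtain ⟨T, hT⟩ := hne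
    by_contra hUB
    exact eq_empty_iff_forall_notMem.1 h9 U
      (mem_gaps.2 ⟨⟨Subset.rfl, hU⟩, hUB, T, hT, mem_powerset.1 (hBU hT)⟩)
  have hlevels := levels_le_of_card_eq_nine hB hU hUB h6 h7 h8
  rw [sum_comp_card_eq_sum_level hBU fun j => 2 * (j : ℤ) - 9, hU]
  norm_num [sum_range_succ]
  omega

end NinePoints

section Fibers

variable {α : Type*} [DecidableEq α] {A F : Finset (Finset α)} {U : Finset α}

/-- The fiber of `F` over `T`: the subsets `S` of `U` with `S ∪ T ∈ F`. For `T` disjoint from `U`,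
these are the traces on `U` of the members of `F` whose part outside `U` is `T`. -/
def fiber (F : Finset (Finset α)) (U T : Finset α) : Finset (Finset α) :=
  {S ∈ U.powerset | S ∪ T ∈ F}

theorem mem_fiber {S T : Finset α} : S ∈ fiber F U T ↔ S ⊆ U ∧ S ∪ T ∈ F := by
  rw [fiber, mem_filter, mem_powerset]

theorem inter_mem_fiber_sdiff {S : Finset α} (hS : S ∈ F) : S ∩ U ∈ fiber F U (S \ U) := by
  rw [mem_fiber, union_comm, sdiff_union_inter]
  exact ⟨inter_subset_right, hS⟩

theorem supClosed_fiber (hF : SupClosed (F : Set (Finset α))) (U T : Finset α) :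
    SupClosed (fiber F U T : Set (Finset α)) := by
  intro S hS R hR
  rw [mem_coe, mem_fiber] at hS hR ⊢
  refine ⟨union_subset hS.1 hR.1, ?_⟩
  rw [sup_eq_union, union_union_distrib_right]
  exact hF hS.2 hR.2

theorem sups_fiber_subset (hF : SupClosed (F : Set (Finset α))) (hAF : A ⊆ F)
    (hAU : A ⊆ U.powerset) (T : Finset α) : A ⊻ fiber F U T ⊆ fiber F U T := by
  refine sups_subset_iff.2 fun S hS R hR => ?_
  rw [mem_fiber] at hR ⊢
  refine ⟨union_subset (mem_powerset.1 (hAU hS)) hR.1, ?_⟩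
  rw [sup_eq_union, union_assoc]
  exact hF (hAF hS) hR.2

theorem sum_comp_inter_eq_sum_fiber {M : Type*} [AddCommMonoid M] (F : Finset (Finset α))
    (U : Finset α) (f : Finset α → M) :
    ∑ S ∈ F, f (S ∩ U) = ∑ T ∈ F.image (· \ U), ∑ S ∈ fiber F U T, f S := by
  rw [← sum_fiberwise_of_maps_to fun S hS => mem_image_of_mem (· \ U) hS]
  refine sum_congr rfl fun T hT => ?_
  have hTU : Disjoint T U := by
    obtain ⟨S, -, rfl⟩ := mem_image.1 hT
    exact sdiff_disjoint
  refine sum_bij' (fun S _ => S ∩ U) (fun S _ => S ∪ T) ?_ ?_ ?_ ?_ fun _ _ => rfl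
  · intro S hS
    obtain ⟨hSF, rfl⟩ := mem_filter.1 hS
    exact inter_mem_fiber_sdiff hSF
  · intro S hS
    obtain ⟨hSU, hSF⟩ := mem_fiber.1 hS
    refine mem_filter.2 ⟨hSF, ?_⟩
    rw [union_sdiff_distrib, sdiff_eq_empty_iff_subset.2 hSU, empty_union,
      sdiff_eq_self_of_disjoint hTU]
  · intro S hS
    obtain ⟨-, rfl⟩ := mem_filter.1 hS
    rw [union_comm, sdiff_union_inter]
  · intro S hS
    rw [union_inter_distrib_right, inter_eq_left.2 (mem_fiber.1 hS).1,
      disjoint_iff_inter_eq_empty.1 hTU, union_empty]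

theorem sum_two_mul_sum_inter_sub {R : Type*} [CommRing R] (F : Finset (Finset α)) (U : Finset α)
    (w : α → R) :
    ∑ S ∈ F, (2 * ∑ x ∈ S ∩ U, w x - ∑ x ∈ U, w x) =
      ∑ x ∈ U, w x * (2 * #{S ∈ F | x ∈ S} - #F) := by
  have hswap : ∑ S ∈ F, ∑ x ∈ S ∩ U, w x = ∑ x ∈ U, ∑ S ∈ F with x ∈ S, w x :=
    sum_comm' fun S x => by simp only [mem_inter, mem_filter]; tauto
  simp only [sum_sub_distrib, ← mul_sum, hswap, sum_const, nsmul_eq_mul, mul_sub, ← sum_mul]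
  rw [mul_sum, mul_comm (#F : R)]
  congr 1
  exact sum_congr rfl fun x _ => by ring

end Fibers

theorem subset_powerset_famUniverse (A : Finset (Finset ℕ)) : A ⊆ (famUniverse A).powerset :=
  fun _ hS => mem_powerset.2 (le_sup (f := id) hS)

-- The sufficient half of Poonen's criterion.
theorem isFC_of_forall_sum_nonneg {R : Type*} [CommRing R] [LinearOrder R] [IsStrictOrderedRing R]
    {A : Finset (Finset ℕ)} {w : ℕ → R} (hw : ∀ x ∈ famUniverse A, 0 ≤ w x)
    (hpos : ∃ x ∈ famUniverse A, 0 < w x)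
    (h : ∀ B ⊆ (famUniverse A).powerset, B.Nonempty → SupClosed (B : Set (Finset ℕ)) →
      A ⊻ B ⊆ B → 0 ≤ ∑ S ∈ B, (2 * ∑ x ∈ S, w x - ∑ x ∈ famUniverse A, w x)) :
    IsFC A := by
  intro F hF hAF
  have hFsup : SupClosed (F : Set (Finset ℕ)) := hF.2
  by_contra! hrare
  have hneg (x) (hx : x ∈ famUniverse A) : (2 * #{S ∈ F | x ∈ S} - #F : R) < 0 :=
    sub_neg.2 (mod_cast hrare x hx)
  have hnonneg : 0 ≤ ∑ S ∈ F, (2 * ∑ x ∈ S ∩ famUniverse A, w x - ∑ x ∈ famUniverse A, w x) := by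
    rw [sum_comp_inter_eq_sum_fiber F _
      fun S => 2 * ∑ x ∈ S, w x - ∑ x ∈ famUniverse A, w x]
    refine sum_nonneg fun T hT => h _ (filter_subset _ _) ?_ (supClosed_fiber hFsup _ T)
      (sups_fiber_subset hFsup hAF (subset_powerset_famUniverse A) T)
    obtain ⟨S, hS, rfl⟩ := mem_image.1 hT
    exact ⟨_, inter_mem_fiber_sdiff hS⟩
  rw [sum_two_mul_sum_inter_sub] at hnonneg
  obtain ⟨y, hy, hwy⟩ := hpos
  exact hnonneg.not_gt <| sum_neg' (fun x hx => mul_nonpos_of_nonneg_of_nonpos (hw x hx)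
    (hneg x hx).le) ⟨y, hy, mul_neg_of_pos_of_neg hwy (hneg y hy)⟩

theorem FC_upper_bound_6_9_general {A : Finset (Finset ℕ)} (hU : #(famUniverse A) = 9)
    (hA : 76 ≤ #(A # 6)) : IsFC A := by
  have hmiss : #((famUniverse A).powersetCard 6 \ A) ≤ 8 := by
    have hsplit := card_level_add_card_powersetCard_sdiff A 6 (famUniverse A)
    have hlevel : A # 6 ⊆ level A 6 (famUniverse A) := fun S hS =>
      mem_level.2 ⟨⟨mem_powerset.1 (subset_powerset_famUniverse A (slice_subset hS)),
        sized_slice hS⟩, slice_subset hS⟩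
    have hcard := card_le_card hlevel
    norm_num [hU, Nat.choose] at hsplit
    omega
  have hne : (famUniverse A).Nonempty := card_pos.1 (by omega)
  refine isFC_of_forall_sum_nonneg (w := fun _ => (1 : ℤ)) (fun _ _ => zero_le_one)
    (hne.imp fun x hx => ⟨hx, zero_lt_one⟩) fun B hBU hBne hB hAB => ?_
  simpa [hU] using sum_two_mul_card_sub_nine_nonneg hB hAB hBU hBne hU hmiss

/-- FC(6, 9) ≤ 76: every family of 76 distinct 6-element subsets of {1, …, 9}
with universe {1, …, 9} is FC. -/
theorem FC_upper_bound_6_9 :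
    ∀ A : Finset (Finset ℕ), A.card = 76 → IsKFamily 6 9 A → IsFC A := by
  intro A hcard hA
  refine FC_upper_bound_6_9_general (by rw [hA.2]; rfl) ?_
  rw [slice, filter_true_of_mem fun S hS => (hA.1 S hS).1, hcard]
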